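/- Let 0 < p ≤ 1, α > 0, and let {b_ε}_{ε>0} ⊆ L¹([−π/2, π/2]) satisfy b_ε(θ) = b_ε(|θ|) ≥ 0 and supp b_ε ⊂ {θ : 0 < c_ε ≤ |θ| ≤ d_ε} with d_ε → 0 as ε → 0. Let f₀ ≥ 0 be an even probability density on ℝ with lim_{ξ→0⁺} (1 − f̂₀(ξ))/ξ^{2/(p+1)} = α, such that f̂₀ is differentiable on (0,∞) and there exist δ ∈ (0,1) and, for every R > 0, a constant K(R) > 0 such that |∂_ξ f̂₀(ξ)/ξ^{(1−p)/(p+1)} − ∂_ξ f̂₀(τ)/τ^{(1−p)/(p+1)}| ≤ K(R)|ξ−τ|^δ for all ξ, τ ∈ (0, R], ξ ≠ τ. Then the same Hölder bound propagates uniformly: for every R > 0 there is K̃(R) ≥ K(R) such that, for all ε small enough, sup_{t≥0} sup_{ξ,τ ∈ (0,R], ξ≠τ} |∂_ξ f̂_ε(ξ,t)/ξ^{(1−p)/(p+1)} − ∂_ξ f̂_ε(τ,t)/τ^{(1−p)/(p+1)}| / |ξ−τ|^δ ≤ K̃(R), where f̂_ε is the Fourier transform of the unique solution of the dissipative Kac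 equation ∂ₜ f̂_ε(ξ,t) = 2∫₀^{π/2} b_ε(θ)(f̂_ε(ξ cos^{p+1}θ, t) f̂_ε(ξ sin^{p+1}θ, t) − f̂_ε(ξ,t)) dθ with initial datum f̂₀. -/

import Mathlib

/-!
In the variable `x = ξ ^ (2 / (p + 1))` the scalings `cos θ ^ (p + 1)`, `sin θ ^ (p + 1)` become
`l = cos² θ` and `1 - l`, so the equation reads
`∂ₜ w(x) = ∫ (w(x l) w(x (1 - l)) - w(x)) dν(l)` for a finite measure `ν` on `(0, 1)`, and
`∂_ξ f̂ / ξ ^ ((1 - p) / (p + 1))` becomes a multiple of `∂ₓ w`. The claim is then that a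
`C¹`-type class `Reg` of functions, with `|g| ≤ 1`, `|g'| ≤ L` and `g'` having modulus of
continuity `M ω`, is invariant under the flow.

The derivative of the gain term is bounded by a convex combination, with weights `l` and `1 - l`, of
values of `|g'|`, so `|g'| ≤ L` persists. For the modulus, with `γ = δ (p + 1) / 2`, one gains the factor
`l ^ (1 + γ) + (1 - l) ^ (1 + γ) ≤ 1 - 2 γ l (1 - l)`, whereas the cross terms cost a multiple
`2 l (1 - l) L² N`: both are of the same order `l (1 - l)`, so a large `M`, depending only on `L`,
`γ` and `N`, hence on `R` and the datum, absorbs them uniformly in the kernel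
(`abs_gainDeriv_sub_le`).

An explicit Euler step is a convex combination of `g` and its averaged gain term, hence preserves
the convex class (`Reg.step`); the scheme converges to the solution, because the collision operator
is Lipschitz for the sup norm (`euler_error`), and the class is closed under pointwise limits
(`Reg.of_tendsto`). This yields `Reg.flow` without a separate uniqueness statement. Boundedness by
`1` of the transforms comes from conservation of mass (`mass_eq_one`).
-/

open Real MeasureTheory Set Filter Topology

noncomputable section

/-- Fourier transform of an even real density: `f̂(ξ) = ∫ cos(ξv) f(v) dv`. -/
def ftEven (f : ℝ → ℝ) (ξ : ℝ) : ℝ := ∫ v : ℝ, Real.cos (ξ * v) * f v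

/-! ### An invariant class for the abstract equation -/

/-- An abstract modulus of continuity `ω` on `(0, X)`: it scales like a power `γ` under
contractions and dominates the Euclidean distance up to the factor `N`. -/
structure IsModulus (X γ N : ℝ) (ω : ℝ → ℝ → ℝ) : Prop where
  nonneg : ∀ x y, 0 ≤ ω x y
  scale : ∀ l ∈ Ioo (0 : ℝ) 1, ∀ x ∈ Ioo 0 X, ∀ y ∈ Ioo 0 X,
    ω (x * l) (y * l) ≤ l ^ γ * ω x y
  dist_le : ∀ x ∈ Ioo 0 X, ∀ y ∈ Ioo 0 X, |x - y| ≤ N * ω x y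
  tendsto : ∀ x ∈ Ioo 0 X, Tendsto (ω x) (𝓝 x) (𝓝 0)

/-- The class of functions that the evolution leaves invariant: continuous, bounded by `1`, and
on `(0, X)` differentiable with derivative bounded by `L` and with modulus of continuity
`M * ω`. -/
structure Reg (X L M : ℝ) (ω : ℝ → ℝ → ℝ) (g : ℝ → ℝ) : Prop where
  cont : Continuous g
  abs_le_one : ∀ x, |g x| ≤ 1
  diff : ∀ x ∈ Ioo 0 X, DifferentiableAt ℝ g x
  abs_deriv_le : ∀ x ∈ Ioo 0 X, |deriv g x| ≤ L
  deriv_sub_le : ∀ x ∈ Ioo 0 X, ∀ y ∈ Ioo 0 X, |deriv g x - deriv g y| ≤ M * ω x y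

/-- The collision operator in the variable `x = ξ ^ (2 / (p + 1))`. The measure `ν` on `(0, 1)`
is the law of `l = cos² θ`, of total mass `σ`, so that this is `σ (Q₊(g, g) - g)`. -/
def kacOp (ν : Measure ℝ) (g : ℝ → ℝ) (x : ℝ) : ℝ :=
  ∫ l, (g (x * l) * g (x * (1 - l)) - g x) ∂ν

lemma Reg.abs_sub_le {X L M : ℝ} {ω : ℝ → ℝ → ℝ} {g : ℝ → ℝ} (hg : Reg X L M ω g)
    {x y : ℝ} (hx : x ∈ Ioo 0 X) (hy : y ∈ Ioo 0 X) : |g x - g y| ≤ L * |x - y| := by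
  exact Convex.norm_image_sub_le_of_norm_deriv_le (𝕜 := ℝ) hg.diff hg.abs_deriv_le
    (convex_Ioo 0 X) hy hx

lemma mul_mem_Ioo_of_lt_one {X x l : ℝ} (hx : x ∈ Ioo 0 X) (hl : l ∈ Ioo (0 : ℝ) 1) :
    x * l ∈ Ioo 0 X :=
  ⟨mul_pos hx.1 hl.1, by nlinarith [hx.1, hx.2, hl.2]⟩

lemma one_sub_mem_Ioo {l : ℝ} (hl : l ∈ Ioo (0 : ℝ) 1) : 1 - l ∈ Ioo (0 : ℝ) 1 :=
  ⟨by linarith [hl.2], by linarith [hl.1]⟩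

lemma one_sub_rpow_ge {l γ : ℝ} (hl : l ∈ Ioo (0 : ℝ) 1) (hγ : γ ∈ Ioo (0 : ℝ) 1) :
    γ * (1 - l) ≤ 1 - l ^ γ := by
  have := rpow_one_add_le_one_add_mul_self (s := l - 1) (p := γ) (by linarith [hl.1])
    hγ.1.le hγ.2.le
  have h2 : 1 + (l - 1) = l := by ring
  rw [h2] at this
  linarith

/-- The `x`-derivative of `g (x * l) * g (x * (1 - l))`, with `H = g'`. -/
def gainDeriv (g : ℝ → ℝ) (l x : ℝ) : ℝ :=
  l * (deriv g (x * l) * g (x * (1 - l))) + (1 - l) * (g (x * l) * deriv g (x * (1 - l)))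

lemma hasDerivAt_gain {X L M : ℝ} {ω : ℝ → ℝ → ℝ} {g : ℝ → ℝ} (hg : Reg X L M ω g)
    {l x : ℝ} (hl : l ∈ Ioo (0 : ℝ) 1) (hx : x ∈ Ioo 0 X) :
    HasDerivAt (fun x => g (x * l) * g (x * (1 - l))) (gainDeriv g l x) x := by
  have h1 : HasDerivAt (fun x => g (x * l)) (deriv g (x * l) * l) x :=
    HasDerivAt.comp x (hg.diff _ (mul_mem_Ioo_of_lt_one hx hl)).hasDerivAt
      (by simpa using (hasDerivAt_id x).mul_const l)
  have h2 : HasDerivAt (fun x => g (x * (1 - l))) (deriv g (x * (1 - l)) * (1 - l)) x :=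
    HasDerivAt.comp x (hg.diff _ (mul_mem_Ioo_of_lt_one hx (one_sub_mem_Ioo hl))).hasDerivAt
      (by simpa using (hasDerivAt_id x).mul_const (1 - l))
  refine (h1.mul h2).congr_deriv ?_
  simp only [gainDeriv]
  ring

lemma abs_gainDeriv_le {X L M : ℝ} {ω : ℝ → ℝ → ℝ} {g : ℝ → ℝ} (hg : Reg X L M ω g)
    {l x : ℝ} (hl : l ∈ Ioo (0 : ℝ) 1) (hx : x ∈ Ioo 0 X) :
    |gainDeriv g l x| ≤ L := by
  have hl' := one_sub_mem_Ioo hl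
  have key : ∀ a b : ℝ, |a| ≤ L → |b| ≤ 1 → |a * b| ≤ L := fun a b ha hb => by
    rw [abs_mul]
    nlinarith [abs_nonneg a, abs_nonneg b]
  have h1 := key _ _ (hg.abs_deriv_le _ (mul_mem_Ioo_of_lt_one hx hl))
    (hg.abs_le_one (x * (1 - l)))
  have h2 := key _ _ (hg.abs_deriv_le _ (mul_mem_Ioo_of_lt_one hx hl'))
    (hg.abs_le_one (x * l))
  rw [mul_comm] at h2
  rw [abs_le] at h1 h2 ⊢
  have := hl.1
  have := hl'.1
  constructor <;> simp only [gainDeriv] <;> nlinarith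

/-- The heart of the matter. A factor `l ^ (1 + γ) + (1 - l) ^ (1 + γ)` is gained on the modulus
of `g'`, and its distance to `1` is at least `2 γ l (1 - l)`. The cross terms cost at most
`2 l (1 - l) L² |x - y|`, so that they are absorbed once `L² N ≤ M γ`. -/
lemma abs_gainDeriv_sub_le {X L M γ N : ℝ} {ω : ℝ → ℝ → ℝ} (hω : IsModulus X γ N ω)
    (hγ : γ ∈ Ioo (0 : ℝ) 1) (hL : 0 ≤ L) (hM : 0 ≤ M) (hLM : L ^ 2 * N ≤ M * γ)
    {g : ℝ → ℝ} (hg : Reg X L M ω g)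
    {l x y : ℝ} (hl : l ∈ Ioo (0 : ℝ) 1) (hx : x ∈ Ioo 0 X) (hy : y ∈ Ioo 0 X) :
    |gainDeriv g l x - gainDeriv g l y| ≤ M * ω x y := by
  have hl' := one_sub_mem_Ioo hl
  -- one of the two symmetric halves
  have half : ∀ m n : ℝ, m ∈ Ioo (0 : ℝ) 1 → n ∈ Ioo (0 : ℝ) 1 →
      |deriv g (x * m) * g (x * n) - deriv g (y * m) * g (y * n)| ≤
        M * (m ^ γ * ω x y) + L ^ 2 * n * (N * ω x y) := by
    intro m n hm hn
    have hxm := mul_mem_Ioo_of_lt_one hx hm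
    have hym := mul_mem_Ioo_of_lt_one hy hm
    have hxn := mul_mem_Ioo_of_lt_one hx hn
    have hyn := mul_mem_Ioo_of_lt_one hy hn
    have e : deriv g (x * m) * g (x * n) - deriv g (y * m) * g (y * n) =
        (deriv g (x * m) - deriv g (y * m)) * g (x * n) +
          deriv g (y * m) * (g (x * n) - g (y * n)) := by ring
    rw [e]
    refine (abs_add_le _ _).trans (add_le_add ?_ ?_)
    · rw [abs_mul]
      calc _ ≤ |deriv g (x * m) - deriv g (y * m)| * 1 := by
            gcongr
            exact hg.abs_le_one _
        _ ≤ M * ω (x * m) (y * m) := by simpa using hg.deriv_sub_le _ hxm _ hym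
        _ ≤ _ := by
            gcongr
            exact hω.scale m hm x hx y hy
    · rw [abs_mul]
      calc _ ≤ L * (L * |x * n - y * n|) :=
            mul_le_mul (hg.abs_deriv_le _ hym) (hg.abs_sub_le hxn hyn) (abs_nonneg _) hL
        _ = L ^ 2 * n * |x - y| := by
            rw [← sub_mul, abs_mul, abs_of_pos hn.1]
            ring
        _ ≤ _ := by
            have := hn.1
            gcongr
            exact hω.dist_le x hx y hy
  have h1 := half l (1 - l) hl hl'
  have h2 := half (1 - l) l hl' hl
  have b1 := one_sub_rpow_ge hl hγ
  have b2 := one_sub_rpow_ge hl' hγ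
  have hlp := hl.1
  have hlp' := hl'.1
  have hW := hω.nonneg x y
  have e : gainDeriv g l x - gainDeriv g l y =
      l * (deriv g (x * l) * g (x * (1 - l)) - deriv g (y * l) * g (y * (1 - l))) +
      (1 - l) * (deriv g (x * (1 - l)) * g (x * l) - deriv g (y * (1 - l)) * g (y * l)) := by
    simp only [gainDeriv]
    ring
  rw [e]
  calc _ ≤ l * (M * (l ^ γ * ω x y) + L ^ 2 * (1 - l) * (N * ω x y)) +
        (1 - l) * (M * ((1 - l) ^ γ * ω x y) + L ^ 2 * l * (N * ω x y)) := by
        refine (abs_add_le _ _).trans (add_le_add ?_ ?_)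
        · rw [abs_mul, abs_of_pos hlp]
          gcongr
        · rw [abs_mul, abs_of_pos hlp']
          gcongr
    _ = (M * (l * l ^ γ + (1 - l) * (1 - l) ^ γ) + 2 * (l * (1 - l)) * (L ^ 2 * N)) * ω x y := by
        ring
    _ ≤ (M * (l * (1 - γ * (1 - l)) + (1 - l) * (1 - γ * (1 - (1 - l)))) +
          2 * (l * (1 - l)) * (M * γ)) * ω x y := by
        gcongr
        · linarith
        · linarith
    _ = M * ω x y := by ring

lemma abs_integral_le_of_abs_le {ν : Measure ℝ} [IsFiniteMeasure ν] {f : ℝ → ℝ} {C : ℝ}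
    (h : ∀ᵐ l ∂ν, |f l| ≤ C) : |∫ l, f l ∂ν| ≤ C * ν.real univ :=
  norm_integral_le_of_norm_le_const (G := ℝ) (f := f) h

lemma continuous_gain {g : ℝ → ℝ} (hg : Continuous g) (x : ℝ) :
    Continuous fun l => g (x * l) * g (x * (1 - l)) := by fun_prop

lemma integrable_gain (ν : Measure ℝ) [IsFiniteMeasure ν] {g : ℝ → ℝ} (hg : Continuous g)
    (h1 : ∀ x, |g x| ≤ 1) (x : ℝ) : Integrable (fun l => g (x * l) * g (x * (1 - l))) ν := by
  refine Integrable.of_bound (continuous_gain hg x).aestronglyMeasurable 1 ?_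
  refine Eventually.of_forall fun l => ?_
  rw [norm_mul]
  exact mul_le_one₀ (h1 _) (norm_nonneg _) (h1 _)

lemma kacOp_eq (ν : Measure ℝ) [IsFiniteMeasure ν] {g : ℝ → ℝ} (hg : Continuous g)
    (h1 : ∀ x, |g x| ≤ 1) (x : ℝ) :
    kacOp ν g x = (∫ l, g (x * l) * g (x * (1 - l)) ∂ν) - ν.real univ * g x := by
  simp only [kacOp]
  rw [integral_sub (integrable_gain ν hg h1 x) (integrable_const _)]
  simp

/-- One explicit Euler step is a convex combination of `g` and of its averaged gain term, hence
it preserves the class. -/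
lemma Reg.step {X L M γ N : ℝ} {ω : ℝ → ℝ → ℝ} (hω : IsModulus X γ N ω)
    (hγ : γ ∈ Ioo (0 : ℝ) 1) (hL : 0 ≤ L) (hM : 0 ≤ M) (hLM : L ^ 2 * N ≤ M * γ)
    (ν : Measure ℝ) [IsFiniteMeasure ν] (hν : ∀ᵐ l ∂ν, l ∈ Ioo (0 : ℝ) 1)
    {h : ℝ} (h0 : 0 ≤ h) (hh : h * ν.real univ ≤ 1)
    {g : ℝ → ℝ} (hg : Reg X L M ω g) :
    Reg X L M ω (fun x => g x + h * kacOp ν g x) := by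
  set G : ℝ → ℝ := fun x => ∫ l, g (x * l) * g (x * (1 - l)) ∂ν with hG
  set σ := ν.real univ with hσ
  have e : (fun x => g x + h * kacOp ν g x) = fun x => (1 - h * σ) * g x + h * G x := by
    funext x
    rw [kacOp_eq ν hg.cont hg.abs_le_one x]
    ring
  have hnorm : ∀ x l, ‖g (x * l) * g (x * (1 - l))‖ ≤ 1 := fun x l => by
    rw [norm_mul]
    exact mul_le_one₀ (hg.abs_le_one _) (norm_nonneg _) (hg.abs_le_one _)
  have comb : ∀ a b B : ℝ, |a| ≤ B → |b| ≤ B * σ → |(1 - h * σ) * a + h * b| ≤ B := by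
    intro a b B ha hb
    rw [abs_le] at ha hb ⊢
    constructor <;> nlinarith
  have hmeas : ∀ x, AEStronglyMeasurable (fun l => gainDeriv g l x) ν := by
    intro x
    have := hg.cont.measurable
    have := measurable_deriv g
    refine Measurable.aestronglyMeasurable ?_
    unfold gainDeriv
    fun_prop
  have hder : ∀ x ∈ Ioo 0 X, HasDerivAt G (∫ l, gainDeriv g l x ∂ν) x := by
    intro x hx
    refine (hasDerivAt_integral_of_dominated_loc_of_deriv_le (bound := fun _ => L)
      (F' := fun x l => gainDeriv g l x) (Ioo_mem_nhds hx.1 hx.2)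
      (Eventually.of_forall fun y => (continuous_gain hg.cont y).aestronglyMeasurable)
      (integrable_gain ν hg.cont hg.abs_le_one x) (hmeas x) ?_ (integrable_const _) ?_).2
    · filter_upwards [hν] with l hl y hy
      exact abs_gainDeriv_le hg hl hy
    · filter_upwards [hν] with l hl y hy
      exact hasDerivAt_gain hg hl hy
  have hint : ∀ x ∈ Ioo 0 X, Integrable (fun l => gainDeriv g l x) ν := by
    intro x hx
    refine Integrable.of_bound (hmeas x) L ?_
    filter_upwards [hν] with l hl
    exact abs_gainDeriv_le hg hl hx
  have hder' : ∀ x ∈ Ioo 0 X, HasDerivAt (fun x => (1 - h * σ) * g x + h * G x)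
      ((1 - h * σ) * deriv g x + h * ∫ l, gainDeriv g l x ∂ν) x := fun x hx =>
    ((hg.diff x hx).hasDerivAt.const_mul _).add ((hder x hx).const_mul _)
  rw [e]
  refine ⟨?_, ?_, fun x hx => (hder' x hx).differentiableAt, ?_, ?_⟩
  · have : Continuous G := by
      refine continuous_of_dominated (bound := fun _ => 1)
        (fun x => (continuous_gain hg.cont x).aestronglyMeasurable)
        (fun x => Eventually.of_forall fun l => hnorm x l) (integrable_const _)
        (Eventually.of_forall fun l => ?_)
      have := hg.cont
      fun_prop
    have := hg.cont
    fun_prop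
  · intro x
    refine comb _ _ 1 (hg.abs_le_one x) ?_
    exact abs_integral_le_of_abs_le (Eventually.of_forall (hnorm x))
  · intro x hx
    rw [(hder' x hx).deriv]
    refine comb _ _ L (hg.abs_deriv_le x hx) ?_
    refine abs_integral_le_of_abs_le ?_
    filter_upwards [hν] with l hl
    exact abs_gainDeriv_le hg hl hx
  · intro x hx y hy
    rw [(hder' x hx).deriv, (hder' y hy).deriv]
    have := comb (deriv g x - deriv g y)
      ((∫ l, gainDeriv g l x ∂ν) - ∫ l, gainDeriv g l y ∂ν) (M * ω x y)
      (hg.deriv_sub_le x hx y hy) ?_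
    · convert this using 2
      ring
    · rw [← integral_sub (hint x hx) (hint y hy)]
      refine abs_integral_le_of_abs_le ?_
      filter_upwards [hν] with l hl
      exact abs_gainDeriv_sub_le hω hγ hL hM hLM hg hl hx hy

/-- The class is closed under pointwise limits. The derivatives are only known to be bounded, so
their limit is taken along an ultrafilter; equicontinuity makes it the derivative of the limit. -/
lemma Reg.of_tendsto {X L M γ N : ℝ} {ω : ℝ → ℝ → ℝ} (hω : IsModulus X γ N ω)
    {G : ℕ → ℝ → ℝ} {g : ℝ → ℝ} (hG : ∀ᶠ n in atTop, Reg X L M ω (G n))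
    (hlim : ∀ x, Tendsto (fun n => G n x) atTop (𝓝 (g x))) (hg : Continuous g)
    (hg1 : ∀ x, |g x| ≤ 1) : Reg X L M ω g := by
  set U : Ultrafilter ℕ := hyperfilter ℕ with hU
  have hUle : (U : Filter ℕ) ≤ atTop := Nat.hyperfilter_le_atTop
  have hGU : ∀ᶠ n in (U : Filter ℕ), Reg X L M ω (G n) := hUle hG
  have hlimU : ∀ x, Tendsto (fun n => G n x) U (𝓝 (g x)) := fun x => (hlim x).mono_left hUle
  have hex : ∀ x ∈ Ioo 0 X, ∃ H, Tendsto (fun n => deriv (G n) x) U (𝓝 H) := by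
    intro x hx
    obtain ⟨H, -, hH⟩ := (isCompact_Icc (a := -L) (b := L)).ultrafilter_le_nhds'
      (U.map fun n => deriv (G n) x) (by
        rw [Ultrafilter.mem_map]
        filter_upwards [hGU] with n hn
        exact abs_le.1 (hn.abs_deriv_le x hx))
    exact ⟨H, hH⟩
  choose! H hH using hex
  have hder : ∀ x ∈ Ioo 0 X, HasDerivAt g (H x) x := by
    intro x hx
    rw [hasDerivAt_iff_isLittleO, Asymptotics.isLittleO_iff]
    intro η hη
    have h1 : ∀ᶠ y in 𝓝 x, M * ω x y < η := by
      have := (hω.tendsto x hx).const_mul M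
      rw [mul_zero] at this
      exact this.eventually_lt_const hη
    obtain ⟨r, hr, hball⟩ := Metric.eventually_nhds_iff_ball.1
      (h1.and (Ioo_mem_nhds hx.1 hx.2))
    filter_upwards [Metric.ball_mem_nhds x hr] with y hy
    have hbd : ∀ᶠ n in (U : Filter ℕ),
        ‖G n y - G n x - (y - x) • deriv (G n) x‖ ≤ η * ‖y - x‖ := by
      filter_upwards [hGU] with n hn
      have hd : ∀ z ∈ Metric.ball x r, HasDerivWithinAt (fun z => G n z - z * deriv (G n) x)
          (deriv (G n) z - deriv (G n) x) (Metric.ball x r) z := fun z hz => by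
        have := (hn.diff z (hball z hz).2).hasDerivAt.sub
          ((hasDerivAt_id z).mul_const (deriv (G n) x))
        rw [one_mul] at this
        exact this.hasDerivWithinAt
      have := Convex.norm_image_sub_le_of_norm_hasDerivWithin_le (C := η) hd
        (fun z hz => by
          rw [norm_sub_rev]
          exact (hn.deriv_sub_le x hx z (hball z hz).2).trans (hball z hz).1.le)
        (convex_ball x r) (Metric.mem_ball_self hr) hy
      have e : G n y - G n x - (y - x) • deriv (G n) x =
          G n y - y * deriv (G n) x - (G n x - x * deriv (G n) x) := by
        rw [smul_eq_mul]
        ring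
      rw [e]
      exact this
    refine le_of_tendsto ?_ hbd
    exact (((hlimU y).sub (hlimU x)).sub ((hH x hx).const_smul (y - x))).norm
  refine ⟨hg, hg1, fun x hx => (hder x hx).differentiableAt, ?_, ?_⟩
  · intro x hx
    rw [(hder x hx).deriv]
    refine le_of_tendsto (hH x hx).abs ?_
    filter_upwards [hGU] with n hn using hn.abs_deriv_le x hx
  · intro x hx y hy
    rw [(hder x hx).deriv, (hder y hy).deriv]
    refine le_of_tendsto ((hH x hx).sub (hH y hy)).abs ?_
    filter_upwards [hGU] with n hn using hn.deriv_sub_le x hx y hy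

/-! ### Convergence of the Euler scheme and invariance -/

lemma abs_kacOp_sub_le (ν : Measure ℝ) [IsFiniteMeasure ν] {g k : ℝ → ℝ} (hg : Continuous g)
    (hk : Continuous k) (hg1 : ∀ x, |g x| ≤ 1) (hk1 : ∀ x, |k x| ≤ 1) {D : ℝ}
    (hD : ∀ x, |g x - k x| ≤ D) (x : ℝ) :
    |kacOp ν g x - kacOp ν k x| ≤ 3 * ν.real univ * D := by
  simp only [kacOp]
  have hig : Integrable (fun l => g (x * l) * g (x * (1 - l)) - g x) ν :=
    (integrable_gain ν hg hg1 x).sub (integrable_const _)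
  have hik : Integrable (fun l => k (x * l) * k (x * (1 - l)) - k x) ν :=
    (integrable_gain ν hk hk1 x).sub (integrable_const _)
  rw [← integral_sub hig hik]
  have : 3 * ν.real univ * D = (3 * D) * ν.real univ := by ring
  rw [this]
  refine abs_integral_le_of_abs_le (Eventually.of_forall fun l => ?_)
  have e : g (x * l) * g (x * (1 - l)) - g x - (k (x * l) * k (x * (1 - l)) - k x) =
    ((g (x * l) - k (x * l)) * g (x * (1 - l)) + k (x * l) * (g (x * (1 - l)) - k (x * (1 - l))))
      - (g x - k x) := by ring
  rw [e]
  have hD0 : 0 ≤ D := (abs_nonneg _).trans (hD 0)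
  have h1 : |(g (x * l) - k (x * l)) * g (x * (1 - l))| ≤ D * 1 := by
    rw [abs_mul]
    exact mul_le_mul (hD _) (hg1 _) (abs_nonneg _) hD0
  have h2 : |k (x * l) * (g (x * (1 - l)) - k (x * (1 - l)))| ≤ 1 * D := by
    rw [abs_mul]
    exact mul_le_mul (hk1 _) (hD _) (abs_nonneg _) zero_le_one
  have h3 := hD x
  rw [abs_le] at *
  constructor <;> linarith [h1.1, h1.2, h2.1, h2.2, h3.1, h3.2]

lemma abs_kacOp_le (ν : Measure ℝ) [IsFiniteMeasure ν] {g : ℝ → ℝ}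
    (hg1 : ∀ x, |g x| ≤ 1) (x : ℝ) : |kacOp ν g x| ≤ 2 * ν.real univ := by
  refine abs_integral_le_of_abs_le (Eventually.of_forall fun l => ?_)
  refine (norm_sub_le (E := ℝ) _ _).trans ?_
  have : ‖g (x * l) * g (x * (1 - l))‖ ≤ 1 := by
    rw [norm_mul]
    exact mul_le_one₀ (hg1 _) (norm_nonneg _) (hg1 _)
  have h2 : ‖g x‖ ≤ 1 := hg1 x
  linarith

/-- Explicit Euler iterates with time step `h`. -/
def euler (ν : Measure ℝ) (h : ℝ) (g : ℝ → ℝ) : ℕ → ℝ → ℝ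
  | 0 => g
  | n + 1 => fun x => euler ν h g n x + h * kacOp ν (euler ν h g n) x

/-- The local truncation error of the Euler scheme is quadratic in the time step. -/
lemma local_error (ν : Measure ℝ) [IsFiniteMeasure ν] {w : ℝ → ℝ → ℝ}
    (hwc : ∀ t ∈ Ici (0 : ℝ), Continuous (w t)) (hw1 : ∀ t ∈ Ici (0 : ℝ), ∀ x, |w t x| ≤ 1)
    (hw : ∀ x, ∀ t ∈ Ici (0 : ℝ),
      HasDerivWithinAt (fun s => w s x) (kacOp ν (w t) x) (Ici 0) t)
    {t h : ℝ} (ht : 0 ≤ t) (h0 : 0 ≤ h) (x : ℝ) :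
    |w (t + h) x - w t x - h * kacOp ν (w t) x| ≤ 6 * ν.real univ ^ 2 * h ^ 2 := by
  have hsub : Icc t (t + h) ⊆ Ici (0 : ℝ) := fun s hs => ht.trans hs.1
  have htm : t ∈ Icc t (t + h) := ⟨le_rfl, by linarith⟩
  have hσ : 0 ≤ ν.real univ := measureReal_nonneg
  have h1 : ∀ s ∈ Icc t (t + h), ∀ y, |w s y - w t y| ≤ 2 * ν.real univ * h := by
    intro s hs y
    have := Convex.norm_image_sub_le_of_norm_hasDerivWithin_le
      (fun r hr => (hw y r (hsub hr)).mono hsub)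
      (fun r hr => abs_kacOp_le ν (hw1 r (hsub hr)) y) (convex_Icc t (t + h)) htm hs
    refine this.trans ?_
    rw [Real.norm_eq_abs, abs_of_nonneg (by linarith [hs.1])]
    gcongr
    linarith [hs.2]
  have hd : ∀ s ∈ Icc t (t + h), HasDerivWithinAt (fun s => w s x - s * kacOp ν (w t) x)
      (kacOp ν (w s) x - kacOp ν (w t) x) (Icc t (t + h)) s := fun s hs => by
    have := ((hw x s (hsub hs)).mono hsub).sub
      ((hasDerivWithinAt_id s (Icc t (t + h))).mul_const (kacOp ν (w t) x))
    rw [one_mul] at this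
    exact this
  have := Convex.norm_image_sub_le_of_norm_hasDerivWithin_le hd
    (fun s hs => abs_kacOp_sub_le ν (hwc s (hsub hs)) (hwc t ht) (hw1 s (hsub hs)) (hw1 t ht)
      (h1 s hs) x) (convex_Icc t (t + h)) htm ⟨by linarith, le_rfl⟩
  rw [Real.norm_eq_abs, Real.norm_eq_abs, add_sub_cancel_left, abs_of_nonneg h0] at this
  convert this using 1
  · congr 1
    ring
  · ring

lemma euler_error (ν : Measure ℝ) [IsFiniteMeasure ν] {w : ℝ → ℝ → ℝ}
    (hwc : ∀ t ∈ Ici (0 : ℝ), Continuous (w t)) (hw1 : ∀ t ∈ Ici (0 : ℝ), ∀ x, |w t x| ≤ 1)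
    (hw : ∀ x, ∀ t ∈ Ici (0 : ℝ),
      HasDerivWithinAt (fun s => w s x) (kacOp ν (w t) x) (Ici 0) t)
    {h : ℝ} (h0 : 0 ≤ h) (hec : ∀ n, Continuous (euler ν h (w 0) n))
    (he1 : ∀ n x, |euler ν h (w 0) n x| ≤ 1) (n : ℕ) (x : ℝ) :
    |w (n * h) x - euler ν h (w 0) n x| ≤
      6 * ν.real univ ^ 2 * h ^ 2 * n * (1 + 3 * ν.real univ * h) ^ n := by
  have hσ : 0 ≤ ν.real univ := measureReal_nonneg
  set σ := ν.real univ with hσd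
  induction n generalizing x with
  | zero => simp [euler]
  | succ n ih =>
    have hn : (0 : ℝ) ≤ n * h := by positivity
    have l1 := local_error ν hwc hw1 hw hn h0 x
    have l2 := abs_kacOp_sub_le ν (hwc _ hn) (hec n) (hw1 _ hn) (he1 n) ih x
    have l3 := ih x
    have e : ((n + 1 : ℕ) : ℝ) * h = n * h + h := by push_cast; ring
    set E := 6 * σ ^ 2 * h ^ 2 * n * (1 + 3 * σ * h) ^ n with hE
    have l4 : |h * (kacOp ν (w (n * h)) x - kacOp ν (euler ν h (w 0) n) x)| ≤
        h * (3 * σ * E) := by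
      rw [abs_mul, abs_of_nonneg h0]
      gcongr
    have e2 : w (n * h + h) x - euler ν h (w 0) (n + 1) x =
        (w (n * h + h) x - w (n * h) x - h * kacOp ν (w (n * h)) x) +
        ((w (n * h) x - euler ν h (w 0) n x) +
          h * (kacOp ν (w (n * h)) x - kacOp ν (euler ν h (w 0) n) x)) := by
      simp only [euler]
      ring
    rw [e, e2]
    have hq : 1 ≤ (1 + 3 * σ * h) ^ (n + 1) := one_le_pow₀ (by nlinarith [mul_nonneg hσ h0])
    calc _ ≤ 6 * σ ^ 2 * h ^ 2 + (E + h * (3 * σ * E)) :=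
          (abs_add_le _ _).trans (add_le_add l1 ((abs_add_le _ _).trans (add_le_add l3 l4)))
      _ = 6 * σ ^ 2 * h ^ 2 * 1 + 6 * σ ^ 2 * h ^ 2 * n * (1 + 3 * σ * h) ^ (n + 1) := by
          rw [hE]
          ring
      _ ≤ 6 * σ ^ 2 * h ^ 2 * (1 + 3 * σ * h) ^ (n + 1) +
          6 * σ ^ 2 * h ^ 2 * n * (1 + 3 * σ * h) ^ (n + 1) := by gcongr
      _ = _ := by
          push_cast
          ring

/-- The class is invariant under the flow of the abstract equation: the Euler scheme converges
to the solution and each of its iterates belongs to the class. -/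
theorem Reg.flow {X L M γ N : ℝ} {ω : ℝ → ℝ → ℝ} (hω : IsModulus X γ N ω)
    (hγ : γ ∈ Ioo (0 : ℝ) 1) (hL : 0 ≤ L) (hM : 0 ≤ M) (hLM : L ^ 2 * N ≤ M * γ)
    (ν : Measure ℝ) [IsFiniteMeasure ν] (hν : ∀ᵐ l ∂ν, l ∈ Ioo (0 : ℝ) 1) {w : ℝ → ℝ → ℝ}
    (hwc : ∀ t ∈ Ici (0 : ℝ), Continuous (w t)) (hw1 : ∀ t ∈ Ici (0 : ℝ), ∀ x, |w t x| ≤ 1)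
    (hw : ∀ x, ∀ t ∈ Ici (0 : ℝ),
      HasDerivWithinAt (fun s => w s x) (kacOp ν (w t) x) (Ici 0) t)
    (hw0 : Reg X L M ω (w 0)) {t : ℝ} (ht : 0 ≤ t) : Reg X L M ω (w t) := by
  have hσ : 0 ≤ ν.real univ := measureReal_nonneg
  set σ := ν.real univ with hσd
  have hreg : ∀ h, 0 ≤ h → h * σ ≤ 1 → ∀ n, Reg X L M ω (euler ν h (w 0) n) := by
    intro h h0 hh n
    induction n with
    | zero => exact hw0
    | succ n ih => exact Reg.step hω hγ hL hM hLM ν hν h0 hh ih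
  have hsmall : ∀ᶠ n : ℕ in atTop, t / n * σ ≤ 1 := by
    have h1 : Tendsto (fun n : ℕ => t / n * σ) atTop (𝓝 (0 * σ)) :=
      (tendsto_const_div_atTop_nhds_zero_nat t).mul_const σ
    rw [zero_mul] at h1
    exact h1.eventually_le_const one_pos
  refine Reg.of_tendsto hω (G := fun n => euler ν (t / n) (w 0) n) ?_ ?_ (hwc t ht) (hw1 t ht)
  · filter_upwards [hsmall] with n hn
    exact hreg _ (by positivity) hn n
  · intro x
    rw [tendsto_iff_norm_sub_tendsto_zero]
    have hz : Tendsto (fun n : ℕ => 6 * σ ^ 2 * t ^ 2 * exp (3 * σ * t) / n) atTop (𝓝 0) :=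
      tendsto_const_div_atTop_nhds_zero_nat _
    refine squeeze_zero' (Eventually.of_forall fun n => norm_nonneg _) ?_ hz
    filter_upwards [hsmall, eventually_gt_atTop 0] with n hn hn0
    have hnr : (0 : ℝ) < n := by exact_mod_cast hn0
    have h0 : 0 ≤ t / n := by positivity
    have := euler_error ν hwc hw1 hw h0 (fun k => (hreg _ h0 hn k).cont)
      (fun k => (hreg _ h0 hn k).abs_le_one) n x
    rw [mul_div_cancel₀ _ hnr.ne'] at this
    rw [norm_sub_rev, Real.norm_eq_abs]
    refine this.trans ?_
    have hexp : (1 + 3 * σ * (t / n)) ^ n ≤ exp (3 * σ * t) := by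
      calc _ ≤ exp (3 * σ * (t / n)) ^ n := by
            gcongr
            rw [add_comm]
            exact add_one_le_exp _
        _ = exp (3 * σ * t) := by
            rw [← exp_nat_mul]
            congr 1
            field_simp
    calc _ ≤ 6 * σ ^ 2 * (t / n) ^ 2 * n * exp (3 * σ * t) := by gcongr
      _ = _ := by field_simp

/-! ### Even Fourier transforms and conservation of mass -/

lemma ftEven_zero (f : ℝ → ℝ) : ftEven f 0 = ∫ v, f v := by simp [ftEven]

lemma continuous_ftEven {f : ℝ → ℝ} (hf : Integrable f) : Continuous (ftEven f) := by
  refine continuous_of_dominated (bound := fun v => |f v|) (fun ξ => ?_) (fun ξ => ?_) hf.abs ?_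
  · exact (Continuous.aestronglyMeasurable (by fun_prop)).mul hf.aestronglyMeasurable
  · refine Eventually.of_forall fun v => ?_
    rw [norm_mul]
    exact mul_le_of_le_one_left (norm_nonneg _) (abs_cos_le_one _)
  · exact Eventually.of_forall fun v => by fun_prop

lemma abs_ftEven_le {f : ℝ → ℝ} (hf : Integrable f) (h0 : ∀ v, 0 ≤ f v) (ξ : ℝ) :
    |ftEven f ξ| ≤ ∫ v, f v := by
  refine norm_integral_le_of_norm_le (G := ℝ) hf (Eventually.of_forall fun v => ?_)
  rw [norm_mul]
  exact (mul_le_of_le_one_left (norm_nonneg _) (abs_cos_le_one _)).trans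
    (abs_of_nonneg (h0 v)).le

/-- At frequency `0` the equation is the logistic equation for the mass, of which `1` is an
equilibrium. -/
lemma mass_eq_one {m : ℝ → ℝ} {σ : ℝ} (h0 : m 0 = 1)
    (hm : ∀ t ∈ Ici (0 : ℝ), HasDerivWithinAt m (σ * (m t * m t - m t)) (Ici 0) t)
    {t : ℝ} (ht : 0 ≤ t) : m t = 1 := by
  have hc : ContinuousOn m (Icc 0 t) := fun s hs =>
    ((hm s hs.1).continuousWithinAt).mono fun r hr => hr.1
  obtain ⟨B, hB⟩ := isCompact_Icc.exists_bound_of_continuousOn hc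
  have := norm_le_gronwallBound_of_norm_deriv_right_le (f := fun s => m s - 1)
    (f' := fun s => σ * (m s * m s - m s)) (δ := 0) (K := |σ| * B) (ε := 0)
    (hc.sub continuousOn_const)
    (fun s hs => ((hm s hs.1).mono (Ici_subset_Ici.2 hs.1)).sub_const 1)
    (by simp [h0])
    (fun s hs => by
      have e : σ * (m s * m s - m s) = σ * m s * (m s - 1) := by ring
      rw [e, norm_mul, norm_mul, add_zero]
      gcongr
      · exact le_rfl
      · exact hB s ⟨hs.1, hs.2.le⟩) t ⟨ht, le_rfl⟩
  rw [gronwallBound_ε0_δ0] at this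
  have h2 : m t - 1 = 0 := norm_le_zero_iff.1 this
  linarith

/-! ### The law of `cos² θ` -/

/-- The image under `θ ↦ cos² θ` of the measure with density `2 β` on `(0, π/2)`. -/
def angleLaw (β : ℝ → ℝ) : Measure ℝ :=
  ((volume.restrict (Ioo 0 (π / 2))).withDensity fun θ => ENNReal.ofReal (2 * β θ)).map
    fun θ => cos θ ^ 2

lemma isFiniteMeasure_angleLaw {β : ℝ → ℝ} (hβ : IntegrableOn β (Ioo 0 (π / 2))) :
    IsFiniteMeasure (angleLaw β) := by
  have := isFiniteMeasure_withDensity_ofReal (Integrable.const_mul hβ 2).2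
  unfold angleLaw
  infer_instance

lemma ae_angleLaw (β : ℝ → ℝ) : ∀ᵐ l ∂angleLaw β, l ∈ Ioo (0 : ℝ) 1 := by
  have hm : Measurable fun θ : ℝ => cos θ ^ 2 := by fun_prop
  refine (ae_map_iff hm.aemeasurable (p := fun l => l ∈ Ioo (0 : ℝ) 1) measurableSet_Ioo).2 ?_
  refine (withDensity_absolutelyContinuous _ _).ae_le ?_
  filter_upwards [ae_restrict_mem measurableSet_Ioo] with θ hθ
  have hc : 0 < cos θ := cos_pos_of_mem_Ioo ⟨by linarith [hθ.1, pi_pos], hθ.2⟩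
  have hs : 0 < sin θ := sin_pos_of_pos_of_lt_pi hθ.1 (by linarith [hθ.2, pi_pos])
  exact ⟨by positivity, by nlinarith [sin_sq_add_cos_sq θ]⟩

lemma integral_angleLaw {β : ℝ → ℝ} (hβ : IntegrableOn β (Ioo 0 (π / 2))) (h0 : ∀ θ, 0 ≤ β θ)
    {φ : ℝ → ℝ} (hφ : Continuous φ) :
    ∫ l, φ l ∂angleLaw β = 2 * ∫ θ in (0 : ℝ)..(π / 2), β θ * φ (cos θ ^ 2) := by
  have hm : Measurable fun θ : ℝ => cos θ ^ 2 := by fun_prop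
  rw [angleLaw, integral_map hm.aemeasurable hφ.aestronglyMeasurable,
    integral_withDensity_eq_integral_toReal_smul₀
      (Integrable.const_mul hβ 2).1.aemeasurable.ennreal_ofReal
      (Eventually.of_forall fun θ => ENNReal.ofReal_lt_top),
    intervalIntegral.integral_of_le (by positivity), integral_Ioc_eq_integral_Ioo,
    ← integral_const_mul]
  refine integral_congr_ae (Eventually.of_forall fun θ => ?_)
  simp only [smul_eq_mul]
  rw [ENNReal.toReal_ofReal (by linarith [h0 θ])]
  ring

/-! ### The change of variable `x = ξ ^ (2 / (p + 1))` -/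

/-- In the variable `x = ξ ^ (1 / r)` the Hölder modulus `|ξ - η| ^ δ` becomes
`|x ^ r - y ^ r| ^ δ`. -/
lemma exists_isModulus {X r δ : ℝ} (hX : 0 < X) (hr : 0 < r) (hr1 : r ≤ 1)
    (hδ : δ ∈ Ioo (0 : ℝ) 1) :
    ∃ N, 0 ≤ N ∧ IsModulus X (r * δ) N fun x y => |x ^ r - y ^ r| ^ δ := by
  have hXr : 0 < X ^ r := rpow_pos_of_pos hX r
  have ha : 1 ≤ r⁻¹ := (one_le_inv₀ hr).2 hr1
  have ha0 : 0 < r⁻¹ := inv_pos.2 hr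
  refine ⟨r⁻¹ * (X ^ r) ^ (r⁻¹ - 1) * (X ^ r) ^ (1 - δ), by positivity, ?_, ?_, ?_, ?_⟩
  · intro x y
    positivity
  · intro l hl x hx y hy
    rw [mul_rpow hx.1.le hl.1.le, mul_rpow hy.1.le hl.1.le, ← sub_mul, abs_mul,
      mul_rpow (abs_nonneg _) (abs_nonneg _), abs_of_pos (rpow_pos_of_pos hl.1 r),
      ← rpow_mul hl.1.le, mul_comm]
  · intro x hx y hy
    have mem : ∀ z ∈ Ioo 0 X, z ^ r ∈ Ioo 0 (X ^ r) := fun z hz =>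
      ⟨rpow_pos_of_pos hz.1 r, rpow_lt_rpow hz.1.le hz.2 hr⟩
    have hu := mem x hx
    have hv := mem y hy
    have back : ∀ z ∈ Ioo 0 X, (z ^ r) ^ r⁻¹ = z := fun z hz => rpow_rpow_inv hz.1.le hr.ne'
    have h1 : |(x ^ r) ^ r⁻¹ - (y ^ r) ^ r⁻¹| ≤
        r⁻¹ * (X ^ r) ^ (r⁻¹ - 1) * |x ^ r - y ^ r| := by
      refine Convex.norm_image_sub_le_of_norm_hasDerivWithin_le (f := fun z : ℝ => z ^ r⁻¹)
        (f' := fun z => r⁻¹ * z ^ (r⁻¹ - 1)) (fun z hz => ?_) (fun z hz => ?_)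
        (convex_Ioo 0 (X ^ r)) hv hu
      · exact (hasDerivAt_rpow_const (Or.inl hz.1.ne')).hasDerivWithinAt
      · rw [Real.norm_eq_abs, abs_of_nonneg (mul_nonneg ha0.le (rpow_nonneg hz.1.le _))]
        gcongr
        · exact hz.1.le
        · exact hz.2.le
    have h2 : |x ^ r - y ^ r| ≤ (X ^ r) ^ (1 - δ) * |x ^ r - y ^ r| ^ δ := by
      rcases eq_or_ne (x ^ r - y ^ r) 0 with h | h
      · rw [h, abs_zero]
        positivity
      · have hp := abs_pos.2 h
        calc |x ^ r - y ^ r| = |x ^ r - y ^ r| ^ (1 - δ) * |x ^ r - y ^ r| ^ δ := by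
              rw [← rpow_add hp, sub_add_cancel, rpow_one]
          _ ≤ _ := by
              gcongr
              · linarith [hδ.2]
              · rw [abs_le]
                constructor <;> linarith [hu.1, hu.2, hv.1, hv.2]
    rw [back x hx, back y hy] at h1
    refine h1.trans ?_
    rw [mul_assoc (r⁻¹ * (X ^ r) ^ (r⁻¹ - 1))]
    gcongr
  · intro x hx
    have hcont : ContinuousAt (fun y : ℝ => |x ^ r - y ^ r| ^ δ) x := by
      refine ContinuousAt.rpow_const ?_ (Or.inr hδ.1.le)
      exact (continuousAt_const.sub (continuousAt_rpow_const x r (Or.inl hx.1.ne'))).abs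
    have := hcont.tendsto
    simpa [zero_rpow hδ.1.ne'] using this

/-- A bound and a Hölder condition on `G' ξ / ξ ^ q` put `x ↦ G (|x| ^ r)` in the
class, because its derivative is `r * (G' ξ / ξ ^ q)` at `ξ = x ^ r` when `q = (1 - r) / r`. -/
lemma reg_comp_rpow {G : ℝ → ℝ} {Y r q δ k l : ℝ} (hr : 0 < r) (hq : r * q = 1 - r)
    (hY : 0 < Y) (hG : Continuous G) (hG1 : ∀ ξ, |G ξ| ≤ 1)
    (hd : ∀ ξ > (0 : ℝ), DifferentiableAt ℝ G ξ)
    (hl : ∀ ξ ∈ Ioo 0 Y, |deriv G ξ / ξ ^ q| ≤ l)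
    (hk : ∀ ξ ∈ Ioo 0 Y, ∀ τ ∈ Ioo 0 Y,
      |deriv G ξ / ξ ^ q - deriv G τ / τ ^ q| ≤ k * |ξ - τ| ^ δ) :
    Reg (Y ^ r⁻¹) (r * l) (r * k) (fun x y => |x ^ r - y ^ r| ^ δ) fun x => G (|x| ^ r) := by
  have mem : ∀ x ∈ Ioo 0 (Y ^ r⁻¹), x ^ r ∈ Ioo 0 Y := fun x hx =>
    ⟨rpow_pos_of_pos hx.1 r, by
      have := rpow_lt_rpow hx.1.le hx.2 hr
      rwa [rpow_inv_rpow hY.le hr.ne'] at this⟩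
  have hder : ∀ x ∈ Ioo 0 (Y ^ r⁻¹),
      HasDerivAt (fun x => G (|x| ^ r)) (r * (deriv G (x ^ r) / (x ^ r) ^ q)) x := by
    intro x hx
    have h1 : HasDerivAt (fun x => G (x ^ r)) (deriv G (x ^ r) * (r * x ^ (r - 1))) x :=
      HasDerivAt.comp x (hd _ (mem x hx).1).hasDerivAt
        (hasDerivAt_rpow_const (Or.inl hx.1.ne'))
    have h2 : (x ^ r) ^ q = (x ^ (r - 1))⁻¹ := by
      rw [← rpow_mul hx.1.le, hq, ← rpow_neg hx.1.le, neg_sub]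
    rw [h2, div_inv_eq_mul]
    refine (h1.congr_deriv (by ring)).congr_of_eventuallyEq ?_
    filter_upwards [lt_mem_nhds hx.1] with y hy
    rw [abs_of_pos hy]
  refine ⟨?_, fun x => hG1 _, fun x hx => (hder x hx).differentiableAt, ?_, ?_⟩
  · exact hG.comp (continuous_abs.rpow_const fun x => Or.inr hr.le)
  · intro x hx
    rw [(hder x hx).deriv, abs_mul, abs_of_pos hr]
    gcongr
    exact hl _ (mem x hx)
  · intro x hx y hy
    rw [(hder x hx).deriv, (hder y hy).deriv, ← mul_sub, abs_mul, abs_of_pos hr, mul_assoc]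
    gcongr
    exact hk _ (mem x hx) _ (mem y hy)

/-- Membership of `x ↦ G (|x| ^ r)` in the class gives back the Hölder bound for `G`. -/
lemma holder_of_reg {G : ℝ → ℝ} {Y r q δ L M : ℝ} (hr : 0 < r) (hq : r⁻¹ - 1 = q)
    (hG : Reg (Y ^ r⁻¹) L M (fun x y => |x ^ r - y ^ r| ^ δ) fun x => G (|x| ^ r))
    {ξ τ : ℝ} (hξ : ξ ∈ Ioo 0 Y) (hτ : τ ∈ Ioo 0 Y) :
    |deriv G ξ / ξ ^ q - deriv G τ / τ ^ q| ≤ r⁻¹ * M * |ξ - τ| ^ δ := by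
  set w : ℝ → ℝ := fun x => G (|x| ^ r) with hw
  have ha : 0 < r⁻¹ := inv_pos.2 hr
  have mem : ∀ z ∈ Ioo 0 Y, z ^ r⁻¹ ∈ Ioo 0 (Y ^ r⁻¹) := fun z hz =>
    ⟨rpow_pos_of_pos hz.1 _, rpow_lt_rpow hz.1.le hz.2 ha⟩
  have hder : ∀ z ∈ Ioo 0 Y, deriv G z / z ^ q = r⁻¹ * deriv w (z ^ r⁻¹) := by
    intro z hz
    have h1 : HasDerivAt (fun z => w (z ^ r⁻¹)) (deriv w (z ^ r⁻¹) * (r⁻¹ * z ^ (r⁻¹ - 1))) z :=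
      HasDerivAt.comp (h₂ := w) z (hG.diff _ (mem z hz)).hasDerivAt
        (hasDerivAt_rpow_const (Or.inl hz.1.ne'))
    have h2 : HasDerivAt G (deriv w (z ^ r⁻¹) * (r⁻¹ * z ^ (r⁻¹ - 1))) z := by
      refine h1.congr_of_eventuallyEq ?_
      filter_upwards [lt_mem_nhds hz.1] with y hy
      simp only [hw]
      rw [abs_of_pos (rpow_pos_of_pos hy _), rpow_inv_rpow hy.le hr.ne']
    have hzq : z ^ q ≠ 0 := (rpow_pos_of_pos hz.1 q).ne'
    rw [h2.deriv, hq]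
    field_simp
  rw [hder ξ hξ, hder τ hτ, ← mul_sub, abs_mul, abs_of_pos ha, mul_assoc]
  have := hG.deriv_sub_le _ (mem ξ hξ) _ (mem τ hτ)
  simp only [rpow_inv_rpow hξ.1.le hr.ne', rpow_inv_rpow hτ.1.le hr.ne'] at this
  gcongr

/-- The change of variable turns the collision operator of the equation into `kacOp`. -/
lemma kacOp_angleLaw {β G : ℝ → ℝ} (hβ : IntegrableOn β (Ioo 0 (π / 2))) (h0 : ∀ θ, 0 ≤ β θ)
    (hG : Continuous G) {p : ℝ} (hp : 0 < p) (x : ℝ) :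
    kacOp (angleLaw β) (fun x => G (|x| ^ ((p + 1) / 2))) x =
      2 * ∫ θ in (0 : ℝ)..(π / 2), β θ *
        (G (|x| ^ ((p + 1) / 2) * cos θ ^ (p + 1)) * G (|x| ^ ((p + 1) / 2) * sin θ ^ (p + 1)) -
          G (|x| ^ ((p + 1) / 2))) := by
  have hr : 0 ≤ (p + 1) / 2 := by positivity
  have hcont : Continuous fun x : ℝ => G (|x| ^ ((p + 1) / 2)) :=
    hG.comp (continuous_abs.rpow_const fun x => Or.inr hr)
  refine (integral_angleLaw hβ h0 ((continuous_gain hcont x).sub continuous_const)).trans ?_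
  congr 1
  refine intervalIntegral.integral_congr fun θ hθ => ?_
  rw [uIcc_of_le (by positivity)] at hθ
  have key : ∀ c : ℝ, 0 ≤ c → |x * c ^ 2| ^ ((p + 1) / 2) = |x| ^ ((p + 1) / 2) * c ^ (p + 1) := by
    intro c hc
    rw [abs_mul, mul_rpow (abs_nonneg _) (abs_nonneg _), abs_of_nonneg (sq_nonneg c),
      ← rpow_natCast c 2, ← rpow_mul hc]
    congr 2
    push_cast
    ring
  have hc : 0 ≤ cos θ := cos_nonneg_of_mem_Icc ⟨by linarith [hθ.1, pi_pos], hθ.2⟩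
  have hs : 0 ≤ sin θ := sin_nonneg_of_nonneg_of_le_pi hθ.1 (by linarith [hθ.2, pi_pos])
  have e : 1 - cos θ ^ 2 = sin θ ^ 2 := by linarith [sin_sq_add_cos_sq θ]
  change β θ * (G (|x * cos θ ^ 2| ^ ((p + 1) / 2)) * G (|x * (1 - cos θ ^ 2)| ^ ((p + 1) / 2)) -
    G (|x| ^ ((p + 1) / 2))) = _
  rw [e, key _ hc, key _ hs]

/-- Uniform propagation of the Hölder condition on
`ξ ↦ ∂_ξ f̂₀(ξ)/ξ^{(1-p)/(p+1)}` along the solutions of the dissipative Kac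
equations, uniformly in time, for `ε` small enough. -/
theorem propagation_condition_B
    (p α : ℝ) (hp : 0 < p) (hp1 : p ≤ 1) (hα : 0 < α)
    -- the collision kernels b_ε
    (b : ℝ → ℝ → ℝ) (c d : ℝ → ℝ)
    (hb_int : ∀ ε > (0 : ℝ), IntegrableOn (b ε) (Icc (-(π / 2)) (π / 2)))
    (hb_even : ∀ ε > (0 : ℝ), ∀ θ, b ε θ = b ε |θ|)
    (hb_nonneg : ∀ ε > (0 : ℝ), ∀ θ, 0 ≤ b ε θ)
    (hc_pos : ∀ ε > (0 : ℝ), 0 < c ε)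
    (hsupp : ∀ ε > (0 : ℝ), ∀ θ, b ε θ ≠ 0 → c ε ≤ |θ| ∧ |θ| ≤ d ε)
    (hd_lim : Tendsto d (𝓝[>] 0) (𝓝 0))
    -- the even initial probability density f₀
    (f₀ : ℝ → ℝ) (hf₀_nonneg : ∀ v, 0 ≤ f₀ v) (hf₀_int : Integrable f₀)
    (hf₀_mass : ∫ v, f₀ v = 1) (hf₀_even : ∀ v, f₀ (-v) = f₀ v)
    -- condition (A)
    (hA : Tendsto (fun ξ => (1 - ftEven f₀ ξ) / ξ ^ (2 / (p + 1)))
      (𝓝[>] 0) (𝓝 α))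
    -- condition (B)
    (hdiff : ∀ ξ > (0 : ℝ), DifferentiableAt ℝ (ftEven f₀) ξ)
    (δ : ℝ) (hδ : δ ∈ Ioo (0 : ℝ) 1) (K : ℝ → ℝ) (hK_pos : ∀ R > (0 : ℝ), 0 < K R)
    (hB : ∀ R > (0 : ℝ), ∀ ξ ∈ Ioc (0 : ℝ) R, ∀ τ ∈ Ioc (0 : ℝ) R, ξ ≠ τ →
      |deriv (ftEven f₀) ξ / ξ ^ ((1 - p) / (p + 1)) -
        deriv (ftEven f₀) τ / τ ^ ((1 - p) / (p + 1))| ≤ K R * |ξ - τ| ^ δ)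
    -- the solutions f_ε of the dissipative Kac equations with initial datum f₀
    (fε : ℝ → ℝ → ℝ → ℝ)
    (hfε_nonneg : ∀ ε > (0 : ℝ), ∀ v, ∀ t ∈ Ici (0 : ℝ), 0 ≤ fε ε v t)
    (hfε_int : ∀ ε > (0 : ℝ), ∀ t ∈ Ici (0 : ℝ), Integrable (fun v => fε ε v t))
    (hfε_init : ∀ ε > (0 : ℝ), ∀ v, fε ε v 0 = f₀ v)
    (hfε_eq : ∀ ε > (0 : ℝ), ∀ ξ : ℝ, ∀ t ∈ Ici (0 : ℝ),
      HasDerivWithinAt (fun s => ftEven (fun v => fε ε v s) ξ)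
        (2 * ∫ θ in (0 : ℝ)..(π / 2), b ε θ *
          (ftEven (fun v => fε ε v t) (ξ * Real.cos θ ^ (p + 1)) *
            ftEven (fun v => fε ε v t) (ξ * Real.sin θ ^ (p + 1)) -
            ftEven (fun v => fε ε v t) ξ))
        (Ici 0) t) :
    -- conclusion: uniform Hölder continuity of ∂_ξ f̂_ε(ξ,t)/ξ^{(1-p)/(p+1)}
    ∀ R > (0 : ℝ), ∃ Ktil : ℝ, K R ≤ Ktil ∧ ∃ εbar > (0 : ℝ),
      ∀ ε, 0 < ε → ε < εbar → ∀ t ∈ Ici (0 : ℝ),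
        ∀ ξ ∈ Ioc (0 : ℝ) R, ∀ τ ∈ Ioc (0 : ℝ) R, ξ ≠ τ →
          |deriv (fun η => ftEven (fun v => fε ε v t) η) ξ / ξ ^ ((1 - p) / (p + 1)) -
            deriv (fun η => ftEven (fun v => fε ε v t) η) τ / τ ^ ((1 - p) / (p + 1))|
            ≤ Ktil * |ξ - τ| ^ δ := by
  intro R hR
  have hY : 0 < R + 1 := by linarith
  set r : ℝ := (p + 1) / 2 with hr_def
  set q : ℝ := (1 - p) / (p + 1) with hq_def
  have hr : 0 < r := by positivity
  have hr1 : r ≤ 1 := by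
    rw [hr_def]
    linarith
  have hrq : r * q = 1 - r := by
    rw [hr_def, hq_def]
    field_simp
    ring
  have hrq' : r⁻¹ - 1 = q := by
    field_simp
    linarith
  -- condition (B) on `(0, R + 1)` bounds the quotient itself
  have hK : 0 ≤ K (R + 1) := (hK_pos _ hY).le
  have hB' : ∀ ξ ∈ Ioo 0 (R + 1), ∀ τ ∈ Ioo 0 (R + 1),
      |deriv (ftEven f₀) ξ / ξ ^ q - deriv (ftEven f₀) τ / τ ^ q| ≤
        K (R + 1) * |ξ - τ| ^ δ := by
    intro ξ hξ τ hτ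
    rcases eq_or_ne ξ τ with rfl | hne
    · rw [sub_self, abs_zero]
      positivity
    · exact hB (R + 1) hY ξ ⟨hξ.1, hξ.2.le⟩ τ ⟨hτ.1, hτ.2.le⟩ hne
  obtain ⟨l, hl0, hl⟩ : ∃ l, 0 ≤ l ∧
      ∀ ξ ∈ Ioo 0 (R + 1), |deriv (ftEven f₀) ξ / ξ ^ q| ≤ l := by
    refine ⟨|deriv (ftEven f₀) R / R ^ q| + K (R + 1) * (R + 1) ^ δ, by positivity, ?_⟩
    intro ξ hξ
    have h1 := hB' ξ hξ R ⟨hR, by linarith⟩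
    have h2 : |ξ - R| ^ δ ≤ (R + 1) ^ δ := by
      refine rpow_le_rpow (abs_nonneg _) ?_ hδ.1.le
      rw [abs_le]
      constructor <;> linarith [hξ.1, hξ.2]
    have h3 := abs_sub_abs_le_abs_sub (deriv (ftEven f₀) ξ / ξ ^ q) (deriv (ftEven f₀) R / R ^ q)
    have h4 := mul_le_mul_of_nonneg_left h2 hK
    linarith
  obtain ⟨N, hN, hω⟩ := exists_isModulus (X := (R + 1) ^ r⁻¹) (by positivity) hr hr1 hδ
  have hγ : r * δ ∈ Ioo (0 : ℝ) 1 :=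
    ⟨mul_pos hr hδ.1, by nlinarith [hδ.1, hδ.2]⟩
  -- the modulus of the class: large enough for the datum and to absorb the cross terms
  set k : ℝ := max (K (R + 1)) ((r * l) ^ 2 * N / (r * δ) / r) with hk_def
  have hk0 : 0 ≤ k := hK.trans (le_max_left _ _)
  have hkN : (r * l) ^ 2 * N ≤ r * k * (r * δ) := by
    have := le_max_right (K (R + 1)) ((r * l) ^ 2 * N / (r * δ) / r)
    rw [← hk_def, div_le_iff₀ hr, div_le_iff₀ hγ.1] at this
    linarith
  have hf1 : ∀ ξ, |ftEven f₀ ξ| ≤ 1 := fun ξ =>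
    (abs_ftEven_le hf₀_int hf₀_nonneg ξ).trans hf₀_mass.le
  have hreg0 := reg_comp_rpow (k := k) hr hrq hY (continuous_ftEven hf₀_int) hf1 hdiff hl
    (fun ξ hξ τ hτ => (hB' ξ hξ τ hτ).trans (by
      gcongr
      exact le_max_left _ _))
  refine ⟨max (K R) (r⁻¹ * (r * k)), le_max_left _ _, 1, one_pos, ?_⟩
  intro ε hε _ t ht ξ hξ τ hτ _
  have hb : IntegrableOn (b ε) (Ioo 0 (π / 2)) :=
    (hb_int ε hε).mono_set fun θ hθ => ⟨by linarith [hθ.1, pi_pos], hθ.2.le⟩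
  have hinit : (fun v => fε ε v 0) = f₀ := funext (hfε_init ε hε)
  have hmass : ∀ s ∈ Ici (0 : ℝ), ∫ v, fε ε v s = 1 := by
    intro s hs
    rw [← ftEven_zero]
    refine mass_eq_one (m := fun s => ftEven (fun v => fε ε v s) 0)
      (σ := 2 * ∫ θ in (0 : ℝ)..(π / 2), b ε θ) ?_ (fun s hs => ?_) hs
    · simp only [hinit, ftEven_zero, hf₀_mass]
    · have := hfε_eq ε hε 0 s hs
      simp only [zero_mul, intervalIntegral.integral_mul_const] at this
      refine this.congr_deriv ?_
      ring
  have := isFiniteMeasure_angleLaw hb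
  have hreg := Reg.flow hω hγ (by positivity) (by positivity) hkN (angleLaw (b ε))
    (ae_angleLaw _) (w := fun s x => ftEven (fun v => fε ε v s) (|x| ^ r))
    (fun s hs => (continuous_ftEven (hfε_int ε hε s hs)).comp
      (continuous_abs.rpow_const fun x => Or.inr hr.le))
    (fun s hs x => (abs_ftEven_le (hfε_int ε hε s hs)
      (fun v => hfε_nonneg ε hε v s hs) _).trans (hmass s hs).le)
    (fun x s hs => by
      rw [kacOp_angleLaw hb (hb_nonneg ε hε) (continuous_ftEven (hfε_int ε hε s hs)) hp]
      exact hfε_eq ε hε (|x| ^ r) s hs)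
    (by
      simp only [hinit]
      exact hreg0) ht
  refine (holder_of_reg (G := ftEven fun v => fε ε v t) hr hrq' hreg
    ⟨hξ.1, by linarith [hξ.2]⟩ ⟨hτ.1, by linarith [hτ.2]⟩).trans ?_
  gcongr
  exact le_max_right _ _

end
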